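/- Let Φ ∈ ℝ^{m×n} have restricted isometry constant δ := δ_{2K} ∈ (0,1) of order 2K, let x ∈ ℝ^n be K-sparse with support T, |T| = K ≥ 1, set κ := max_{i,j∈T} |x_i|/|x_j| and τ := δ^{1/2}, and let y = Φx + v with v ≠ 0 and SNR ≥ κ²·δ^{−3/2}. Then for every run of OMP and every integer k with 0 ≤ k ≤ K − ⌈τK⌉, the residuals satisfy ‖r^k‖₂² − ‖r^{k+1}‖₂² ≥ (1 − 7τ)·(x_τ^k)². -/

import Mathlib

noncomputable section
open Finset

/-- `Vec n` is `ℝ^n` with the Euclidean (ℓ²) norm. -/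
abbrev Vec (n : ℕ) := EuclideanSpace ℝ (Fin n)

/-- The standard inner product `⟨u, v⟩ = ∑ i, u i * v i`. -/
def dot {n : ℕ} (u v : Vec n) : ℝ := ∑ i, u i * v i

/-- The `j`-th column of a matrix, as a Euclidean vector. -/
def col {m n : ℕ} (Φ : Matrix (Fin m) (Fin n) ℝ) (j : Fin n) : Vec m :=
  WithLp.toLp 2 fun i => Φ i j

/-- Matrix-vector multiplication `Φ x`, valued in Euclidean space. -/
def mulVec' {m n : ℕ} (Φ : Matrix (Fin m) (Fin n) ℝ) (x : Vec n) : Vec m :=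
  WithLp.toLp 2 fun i => ∑ j, Φ i j * x j

/-- The support of a vector, as a `Finset`. -/
def suppF {n : ℕ} (x : Vec n) : Finset (Fin n) :=
  Finset.univ.filter fun i => x i ≠ 0

/-- Restriction of a vector to an index set (zero outside the set). -/
def restrict {n : ℕ} (x : Vec n) (S : Finset (Fin n)) : Vec n :=
  WithLp.toLp 2 fun i => if i ∈ S then x i else 0

/-- `RIPConst Φ L δ` : δ is the restricted isometry constant of `Φ` of order `L`,
i.e. the smallest `c ≥ 0` such that `(1-c)‖u‖² ≤ ‖Φu‖² ≤ (1+c)‖u‖²` for all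
`L`-sparse `u`. -/
def RIPConst {m n : ℕ} (Φ : Matrix (Fin m) (Fin n) ℝ) (L : ℕ) (δ : ℝ) : Prop :=
  IsLeast {c : ℝ | 0 ≤ c ∧ ∀ u : Vec n, (suppF u).card ≤ L →
    (1 - c) * ‖u‖ ^ 2 ≤ ‖mulVec' Φ u‖ ^ 2 ∧ ‖mulVec' Φ u‖ ^ 2 ≤ (1 + c) * ‖u‖ ^ 2} δ

/-- Signal-to-noise ratio `‖Φx‖²/‖v‖²`. -/
def SNR {m n : ℕ} (Φ : Matrix (Fin m) (Fin n) ℝ) (x : Vec n) (v : Vec m) : ℝ :=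
  ‖mulVec' Φ x‖ ^ 2 / ‖v‖ ^ 2

/-- A run of `N` iterations of Orthogonal Matching Pursuit on data `(Φ, y)`:
`idx (k+1) = t^{k+1}` is the index selected at iteration `k+1`, `sets k = T^k`,
`est k = x^k` and `res k = r^k`. -/
structure OMPRun {m n : ℕ} (Φ : Matrix (Fin m) (Fin n) ℝ) (y : Vec m) (N : ℕ) where
  idx : ℕ → Fin n
  sets : ℕ → Finset (Fin n)
  est : ℕ → Vec n
  res : ℕ → Vec m
  sets_zero : sets 0 = ∅
  est_zero : est 0 = 0
  res_zero : res 0 = y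
  idx_not_mem : ∀ k < N, idx (k + 1) ∉ sets k
  idx_max : ∀ k < N, ∀ i : Fin n, i ∉ sets k →
    |dot (col Φ i) (res k)| ≤ |dot (col Φ (idx (k + 1))) (res k)|
  sets_succ : ∀ k < N, sets (k + 1) = insert (idx (k + 1)) (sets k)
  est_supp : ∀ k < N, suppF (est (k + 1)) ⊆ sets (k + 1)
  est_min : ∀ k < N, ∀ u : Vec n, suppF u ⊆ sets (k + 1) →
    ‖y - mulVec' Φ (est (k + 1))‖ ≤ ‖y - mulVec' Φ u‖
  res_succ : ∀ k < N, res (k + 1) = y - mulVec' Φ (est (k + 1))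

/-- The vector `Φᵀ w` restricted to an index set `A` (the vector of correlations
`⟨φ_i, w⟩` for `i ∈ A`, zero outside `A`), as a Euclidean vector. -/
def colDots {m n : ℕ} (Φ : Matrix (Fin m) (Fin n) ℝ) (A : Finset (Fin n)) (w : Vec m) : Vec n :=
  WithLp.toLp 2 fun i => if i ∈ A then dot (col Φ i) w else 0

/-- The vector `Φᵀ w` of all column correlations, as a plain function (so `‖·‖`
is the sup/ℓ∞ norm). -/
def dualVec {m n : ℕ} (Φ : Matrix (Fin m) (Fin n) ℝ) (w : Vec m) : Fin n → ℝ :=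
  fun i => dot (col Φ i) w

/-- `P⊥_S w` : the projection of `w` onto the orthogonal complement of the span
of the columns of `Φ` indexed by `S`. -/
def perpProj {m n : ℕ} (Φ : Matrix (Fin m) (Fin n) ℝ) (S : Finset (Fin n)) (w : Vec m) : Vec m :=
  w - (Submodule.orthogonalProjectionOnto (Submodule.span ℝ (col Φ '' (S : Set (Fin n)))) w : Vec m)

/-- The `j`-th largest value (1-indexed) among `{|x i| : i ∈ Γ}` (with
multiplicities); `0` if `j > |Γ|` or `j = 0`. -/
def kthLargest {n : ℕ} (x : Vec n) (Γ : Finset (Fin n)) (j : ℕ) : ℝ :=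
  if 1 ≤ j ∧ j ≤ Γ.card then
    (Multiset.sort (Γ.val.map fun i => |x i|) (· ≤ ·)).getD (Γ.card - j) 0
  else 0


theorem mv_add {m n : ℕ} (Φ : Matrix (Fin m) (Fin n) ℝ) (a b : Vec n) :
    mulVec' Φ (a + b) = mulVec' Φ a + mulVec' Φ b := by
  ext i
  simp [mulVec', mul_add, Finset.sum_add_distrib]

theorem mv_smul {m n : ℕ} (Φ : Matrix (Fin m) (Fin n) ℝ) (c : ℝ) (b : Vec n) :
    mulVec' Φ (c • b) = c • mulVec' Φ b := by
  ext i
  simp only [mulVec', PiLp.smul_apply, smul_eq_mul, Finset.mul_sum]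
  exact Finset.sum_congr rfl fun j _ => by ring

theorem mv_sub {m n : ℕ} (Φ : Matrix (Fin m) (Fin n) ℝ) (a b : Vec n) :
    mulVec' Φ (a - b) = mulVec' Φ a - mulVec' Φ b := by
  ext i
  simp [mulVec', mul_sub, Finset.sum_sub_distrib]

theorem mv_zero {m n : ℕ} (Φ : Matrix (Fin m) (Fin n) ℝ) :
    mulVec' Φ 0 = 0 := by
  ext i
  simp [mulVec']

theorem mv_single {m n : ℕ} (Φ : Matrix (Fin m) (Fin n) ℝ) (t : Fin n) :
    mulVec' Φ (EuclideanSpace.single t 1) = col Φ t := by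
  ext i
  simp [mulVec', col]

theorem dot_eq {n : ℕ} (u v : Vec n) : dot u v = inner ℝ u v := by
  simp [dot, PiLp.inner_apply, mul_comm]

theorem inner_mv {m n : ℕ} (Φ : Matrix (Fin m) (Fin n) ℝ) (w : Vec n) (r : Vec m) :
    inner ℝ (mulVec' Φ w) r = ∑ i, w i * dot (col Φ i) r := by
  rw [← dot_eq]
  simp only [dot, mulVec', col, Finset.sum_mul, Finset.mul_sum]
  rw [Finset.sum_comm]
  exact Finset.sum_congr rfl fun i _ => Finset.sum_congr rfl fun j _ => by ring

theorem supp_sub {n : ℕ} (u : Vec n) (S : Finset (Fin n)) :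
    suppF u ⊆ S ↔ ∀ i, i ∉ S → u i = 0 := by
  simp only [suppF, Finset.subset_iff, Finset.mem_filter, Finset.mem_univ, true_and]
  exact forall_congr' fun i => by tauto

theorem supp_restrict {n : ℕ} (u : Vec n) (S : Finset (Fin n)) :
    suppF (restrict u S) ⊆ S := by
  rw [supp_sub]; intro i hi; simp [_root_.restrict, hi]

theorem norm_restrict {n : ℕ} (u : Vec n) (S : Finset (Fin n)) :
    ‖restrict u S‖ ^ 2 = ∑ i ∈ S, u i ^ 2 := by
  rw [EuclideanSpace.real_norm_sq_eq]
  simp [_root_.restrict]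

theorem inner_restrict {n : ℕ} (u : Vec n) (S : Finset (Fin n)) :
    inner ℝ (restrict u S) u = ‖restrict u S‖ ^ 2 := by
  rw [norm_restrict, ← dot_eq]
  simp [dot, _root_.restrict, pow_two]

/-- bilinear RIP -/
theorem rip_bilin {m n : ℕ} (Φ : Matrix (Fin m) (Fin n) ℝ) (δ : ℝ) (L : ℕ)
    (W : Finset (Fin n)) (hW : W.card ≤ L)
    (h : ∀ u : Vec n, (suppF u).card ≤ L →
      (1 - δ) * ‖u‖ ^ 2 ≤ ‖mulVec' Φ u‖ ^ 2 ∧ ‖mulVec' Φ u‖ ^ 2 ≤ (1 + δ) * ‖u‖ ^ 2)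
    (a b : Vec n) (ha : suppF a ⊆ W) (hb : suppF b ⊆ W) :
    inner ℝ a b - δ * ‖a‖ * ‖b‖ ≤ inner ℝ (mulVec' Φ a) (mulVec' Φ b) := by
  have key : ∀ a b : Vec n, suppF a ⊆ W → suppF b ⊆ W →
      inner ℝ a b - δ / 2 * (‖a‖ ^ 2 + ‖b‖ ^ 2) ≤ inner ℝ (mulVec' Φ a) (mulVec' Φ b) := by
    intro a b ha hb
    rw [supp_sub] at ha hb
    have h1 : suppF (a + b) ⊆ W := by
      rw [supp_sub]; intro i hi; simp [ha i hi, hb i hi]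
    have h2 : suppF (a - b) ⊆ W := by
      rw [supp_sub]; intro i hi; simp [ha i hi, hb i hi]
    have e1 := (h _ ((Finset.card_le_card h1).trans hW)).1
    have e2 := (h _ ((Finset.card_le_card h2).trans hW)).2
    rw [mv_add, norm_add_sq_real, norm_add_sq_real] at e1
    rw [mv_sub, norm_sub_sq_real, norm_sub_sq_real] at e2
    linarith
  rcases eq_or_ne a 0 with rfl | ha0
  · simp [mv_zero]
  rcases eq_or_ne b 0 with rfl | hb0
  · simp [mv_zero]
  have pa : 0 < ‖a‖ := norm_pos_iff.2 ha0
  have pb : 0 < ‖b‖ := norm_pos_iff.2 hb0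
  have k := key (‖b‖ • a) (‖a‖ • b)
    (by rw [supp_sub] at ha ⊢; intro i hi; simp [ha i hi])
    (by rw [supp_sub] at hb ⊢; intro i hi; simp [hb i hi])
  simp only [mv_smul, real_inner_smul_left, real_inner_smul_right, norm_smul, norm_norm] at k
  have : 0 < ‖a‖ * ‖b‖ := mul_pos pa pb
  refine le_of_mul_le_mul_left ?_ this
  linarith

theorem kth_spec {n : ℕ} (x : Vec n) (Γ : Finset (Fin n)) (j : ℕ) (h1 : 1 ≤ j)
    (h2 : j ≤ Γ.card) :
    (∃ i ∈ Γ, |x i| = kthLargest x Γ j) ∧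
      j ≤ (Γ.filter fun i => kthLargest x Γ j ≤ |x i|).card := by
  have hk : kthLargest x Γ j =
      (Multiset.sort (Γ.val.map fun i => |x i|) (· ≤ ·)).getD (Γ.card - j) 0 := by
    simp [kthLargest, h1, h2]
  set l := Multiset.sort (Γ.val.map fun i => |x i|) (· ≤ ·) with hl
  have hlen : l.length = Γ.card := by simp [hl]
  have hlt : Γ.card - j < l.length := by omega
  have hk' : kthLargest x Γ j = l[Γ.card - j] := by
    rw [hk, List.getD_eq_getElem _ _ hlt]
  have hcoe : (l : Multiset ℝ) = Γ.val.map fun i => |x i| := Multiset.sort_eq _ _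
  constructor
  · have : l[Γ.card - j] ∈ (l : Multiset ℝ) := by simp
    rw [hcoe, Multiset.mem_map] at this
    obtain ⟨i, hi, e⟩ := this
    exact ⟨i, hi, by rw [hk', e]⟩
  · rw [hk']
    set a := l[Γ.card - j] with ha
    have hs : l.Pairwise (· ≤ ·) := by
      rw [hl]; exact Multiset.pairwise_sort _ _
    have hd : ∀ b ∈ l.drop (Γ.card - j), a ≤ b := by
      rw [List.drop_eq_getElem_cons hlt]
      intro b hb
      have hs' := hs.drop (i := Γ.card - j)
      rw [List.drop_eq_getElem_cons hlt] at hs'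
      rcases List.mem_cons.1 hb with rfl | hb
      · exact le_rfl
      · exact (List.pairwise_cons.1 hs').1 b hb
    have hc : (l.drop (Γ.card - j)).countP (fun b => decide (a ≤ b)) = j := by
      rw [List.countP_eq_length.2 (by simpa using hd)]
      simp [hlen]; omega
    have hc2 : j ≤ l.countP (fun b => decide (a ≤ b)) := by
      rw [← hc]; exact (List.drop_sublist _ _).countP_le
    have hc3 : Multiset.countP (fun b => a ≤ b) (l : Multiset ℝ) =
        (Γ.filter fun i => a ≤ |x i|).card := by
      rw [hcoe, Multiset.countP_map]; rfl
    rw [← hc3, Multiset.coe_countP]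
    exact hc2

theorem scalar_core (τ δ M Q a N U V W G : ℝ) (hτ : 0 < τ) (hτ7 : τ < 1 / 7) (hδ : τ ^ 2 = δ)
    (hQ : 0 < Q) (ha : 0 < a) (hV : V ≤ (1 + δ) * (Q * a * τ))
    (e1 : N - δ * U - (1 + δ) * V ≤ M * Q) (e2 : W ≤ δ * U + (1 + δ) * V)
    (e3 : U ≤ W + N + G) (e4 : τ * G ≤ Q * a) (e5 : Q * a ≤ N) (hM : 0 ≤ M) :
    (1 - 7 * τ) * a ^ 2 * (1 + δ) ≤ M ^ 2 := by
  have hd : δ < τ / 7 := by rw [← hδ]; nlinarith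
  have hd0 : 0 < δ := by rw [← hδ]; positivity
  have hd1 : δ < 1 / 49 := by linarith
  have hp : 0 < Q * a := mul_pos hQ ha
  obtain ⟨P, hP⟩ : ∃ P, P = Q * a := ⟨_, rfl⟩
  rw [← hP] at hV e4 e5 hp
  have hPt : 0 < P * τ := mul_pos hp hτ
  have hV' : (1 + δ) * V ≤ 1.05 * (P * τ) := by
    calc (1 + δ) * V ≤ (1 + δ) * ((1 + δ) * (P * τ)) := by gcongr
      _ = (1 + δ) ^ 2 * (P * τ) := by ring
      _ ≤ 1.05 * (P * τ) := by gcongr; nlinarith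
  have hU : (1 - δ) * U ≤ N + G + 1.05 * (P * τ) := by linarith
  have hG : δ * G ≤ P * τ := by rw [← hδ]; nlinarith
  have h3 : δ * ((1 - δ) * U) ≤ δ * N + P * τ + 1.05 / 49 * (P * τ) := by
    have := mul_le_mul_of_nonneg_left hU hd0.le
    have : δ * (P * τ) ≤ 1 / 49 * (P * τ) := by gcongr
    linarith
  have h4 : (1 - δ) * ((1 - 3 * τ) * P) ≤ (1 - δ) * (M * Q) := by
    have a1 : (1 - δ) * (N - δ * U - (1 + δ) * V) ≤ (1 - δ) * (M * Q) := by
      apply mul_le_mul_of_nonneg_left e1; linarith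
    have a2 : (1 - δ) * ((1 + δ) * V) ≤ 1.05 * (P * τ) := by
      have : (1 - δ) * ((1 + δ) * V) ≤ (1 - δ) * (1.05 * (P * τ)) := by
        apply mul_le_mul_of_nonneg_left hV'; linarith
      nlinarith
    have a3 : (1 - 2 * δ) * P ≤ (1 - 2 * δ) * N := by
      apply mul_le_mul_of_nonneg_left e5; linarith
    have a4 : δ * P ≤ τ / 7 * P := by gcongr
    have a5 : δ * (P * τ) ≤ 1 / 49 * (P * τ) := by gcongr
    nlinarith
  have h5 : (1 - 3 * τ) * P ≤ M * Q := le_of_mul_le_mul_left h4 (by linarith)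
  have h6 : (1 - 3 * τ) * a ≤ M := by
    refine le_of_mul_le_mul_right ?_ hQ
    rw [hP] at h5; linarith
  have h7 : ((1 - 3 * τ) * a) ^ 2 ≤ M ^ 2 := by
    gcongr
    apply mul_nonneg _ ha.le; linarith
  refine le_trans ?_ h7
  have : (1 - 7 * τ) * (1 + δ) ≤ (1 - 3 * τ) ^ 2 := by nlinarith
  nlinarith [sq_nonneg a]

theorem le_of_sq_le_sq_aux {a b : ℝ} (h : a ^ 2 ≤ b ^ 2) (hb : 0 ≤ b) : a ≤ b :=
  le_of_not_gt fun hab => by nlinarith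

theorem run_state {m n K : ℕ} {Φ : Matrix (Fin m) (Fin n) ℝ} {y : Vec m} (run : OMPRun Φ y K)
    (k : ℕ) (hk : k ≤ K) :
    (run.sets k).card ≤ k ∧ suppF (run.est k) ⊆ run.sets k ∧
      run.res k = y - mulVec' Φ (run.est k) ∧
      ∀ u : Vec n, suppF u ⊆ run.sets k → ‖run.res k‖ ≤ ‖y - mulVec' Φ u‖ := by
  have hc : ∀ k, k ≤ K → (run.sets k).card ≤ k := by
    intro k
    induction k with
    | zero => intro _; simp [run.sets_zero]
    | succ k ih =>
      intro h
      rw [run.sets_succ k (by omega)]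
      exact (Finset.card_insert_le _ _).trans (by have := ih (by omega); omega)
  refine ⟨hc k hk, ?_⟩
  cases k with
  | zero =>
    rw [run.sets_zero, run.est_zero, run.res_zero]
    refine ⟨by rw [supp_sub]; simp, by simp [mv_zero], ?_⟩
    intro u hu
    have : u = 0 := by
      rw [supp_sub] at hu; ext i; simpa using hu i (by simp)
    simp [this, mv_zero]
  | succ k =>
    refine ⟨run.est_supp k (by omega), run.res_succ k (by omega), ?_⟩
    intro u hu
    rw [run.res_succ k (by omega)]
    exact run.est_min k (by omega) u hu

theorem run_orth {m n K : ℕ} {Φ : Matrix (Fin m) (Fin n) ℝ} {y : Vec m} (run : OMPRun Φ y K)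
    (k : ℕ) (hk : k ≤ K) (w : Vec n) (hw : suppF w ⊆ run.sets k) :
    inner ℝ (mulVec' Φ w) (run.res k) = 0 := by
  obtain ⟨-, hs, hr, hmin⟩ := run_state run k hk
  have key : ∀ c : ℝ, 2 * c * inner ℝ (mulVec' Φ w) (run.res k) ≤ c ^ 2 * ‖mulVec' Φ w‖ ^ 2 := by
    intro c
    have h := hmin (run.est k + c • w) (by
      rw [supp_sub] at hs hw ⊢; intro i hi; simp [hs i hi, hw i hi])
    have e : y - mulVec' Φ (run.est k + c • w) = run.res k - c • mulVec' Φ w := by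
      rw [mv_add, mv_smul, hr]; abel
    rw [e] at h
    have h2 : ‖run.res k‖ ^ 2 ≤ ‖run.res k - c • mulVec' Φ w‖ ^ 2 := by gcongr
    rw [norm_sub_sq_real, real_inner_smul_right, norm_smul, mul_pow, real_inner_comm] at h2
    simp only [Real.norm_eq_abs, sq_abs] at h2
    linarith
  set p := inner ℝ (mulVec' Φ w) (run.res k) with hp
  set q := ‖mulVec' Φ w‖ ^ 2 with hq
  have hq0 : 0 ≤ q := by positivity
  have h1 := key (p / (q + 1))
  have hq1 : 0 < q + 1 := by linarith
  have h2 : 2 * p ^ 2 * (q + 1) ≤ p ^ 2 * q := by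
    have : 2 * (p / (q + 1)) * p * (q + 1) ^ 2 ≤ (p / (q + 1)) ^ 2 * q * (q + 1) ^ 2 := by gcongr
    field_simp at this
    nlinarith
  nlinarith [mul_nonneg (sq_nonneg p) hq0, sq_nonneg p, pow_eq_zero_iff (two_ne_zero) (M₀ := ℝ) (a := p)]

theorem run_decrease {m n K : ℕ} {Φ : Matrix (Fin m) (Fin n) ℝ} {y : Vec m} (run : OMPRun Φ y K)
    (k : ℕ) (hk : k < K) (δ : ℝ) (hδ : 0 < δ)
    (hφ : ‖col Φ (run.idx (k + 1))‖ ^ 2 ≤ 1 + δ) :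
    (dot (col Φ (run.idx (k + 1))) (run.res k)) ^ 2 ≤
      (‖run.res k‖ ^ 2 - ‖run.res (k + 1)‖ ^ 2) * (1 + δ) := by
  obtain ⟨-, hs, hr, -⟩ := run_state run k hk.le
  obtain ⟨-, -, -, hmin⟩ := run_state run (k + 1) hk
  rw [dot_eq]
  set t := run.idx (k + 1) with ht
  set d := inner ℝ (col Φ t) (run.res k) with hd
  have h := hmin (run.est k + (d / (1 + δ)) • EuclideanSpace.single t 1) (by
    rw [supp_sub] at hs ⊢
    intro i hi
    rw [run.sets_succ k hk, Finset.mem_insert, not_or] at hi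
    simp [hs i hi.2, hi.1, ht])
  have e : y - mulVec' Φ (run.est k + (d / (1 + δ)) • EuclideanSpace.single t 1)
      = run.res k - (d / (1 + δ)) • col Φ t := by
    rw [mv_add, mv_smul, mv_single, hr]; abel
  rw [e] at h
  have h2 : ‖run.res (k + 1)‖ ^ 2 ≤ ‖run.res k - (d / (1 + δ)) • col Φ t‖ ^ 2 := by gcongr
  rw [norm_sub_sq_real, real_inner_smul_right, norm_smul, mul_pow, real_inner_comm, ← hd] at h2
  simp only [Real.norm_eq_abs, sq_abs] at h2
  have hp : 0 < 1 + δ := by linarith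
  have h3 : (d / (1 + δ)) ^ 2 * ‖col Φ t‖ ^ 2 ≤ (d / (1 + δ)) ^ 2 * (1 + δ) := by gcongr
  have h4 : (d / (1 + δ)) ^ 2 * (1 + δ) = d ^ 2 / (1 + δ) := by field_simp
  have h5 : d / (1 + δ) * d = d ^ 2 / (1 + δ) := by field_simp
  rw [← div_le_iff₀ hp]
  linarith

theorem noise_bound {τ δ V X κ a s Kr : ℝ} (hτ : 0 < τ) (hδ : τ ^ 2 = δ) (hV : 0 < V)
    (hκ : 0 < κ) (ha : 0 < a) (hs : τ * Kr ≤ s) (hs0 : 0 ≤ s)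
    (hSNR : X / V ^ 2 ≥ κ ^ 2 * δ ^ (-(3 : ℝ) / 2))
    (hX : X ≤ (1 + δ) * (Kr * (κ * a) ^ 2)) :
    V ≤ (1 + δ) * (Real.sqrt s * a * τ) := by
  have hd0 : 0 < δ := by rw [← hδ]; positivity
  have hpow : δ ^ (-(3 : ℝ) / 2) = (τ ^ 3)⁻¹ := by
    rw [← hδ, ← Real.rpow_natCast τ 2, ← Real.rpow_mul hτ.le, ← Real.rpow_natCast τ 3,
      ← Real.rpow_neg hτ.le]
    norm_num
  rw [hpow, ge_iff_le, le_div_iff₀ (by positivity)] at hSNR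
  have h1 : κ ^ 2 * V ^ 2 ≤ τ ^ 3 * X := by
    have := mul_le_mul_of_nonneg_left hSNR (pow_pos hτ 3).le
    have e : τ ^ 3 * (κ ^ 2 * (τ ^ 3)⁻¹ * V ^ 2) = κ ^ 2 * V ^ 2 := by field_simp
    linarith
  have h2 : κ ^ 2 * V ^ 2 ≤ κ ^ 2 * ((1 + δ) * (s * a ^ 2 * τ ^ 2)) := by
    calc κ ^ 2 * V ^ 2 ≤ τ ^ 3 * X := h1
      _ ≤ τ ^ 3 * ((1 + δ) * (Kr * (κ * a) ^ 2)) := by gcongr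
      _ = (κ ^ 2 * (1 + δ) * a ^ 2 * τ ^ 2) * (τ * Kr) := by ring
      _ ≤ (κ ^ 2 * (1 + δ) * a ^ 2 * τ ^ 2) * s := by gcongr
      _ = _ := by ring
  have h3 := le_of_mul_le_mul_left h2 (by positivity)
  apply le_of_sq_le_sq_aux _ (by positivity)
  calc V ^ 2 ≤ (1 + δ) * (s * a ^ 2 * τ ^ 2) := h3
    _ ≤ (1 + δ) ^ 2 * (s * a ^ 2 * τ ^ 2) := by gcongr; nlinarith
    _ = _ := by
      rw [mul_pow, mul_pow, mul_pow, Real.sq_sqrt hs0]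

/-- per-iteration reduction of the residual energy:
`‖r^k‖² − ‖r^{k+1}‖² ≥ (1 − 7τ)(x_τ^k)²` for `0 ≤ k ≤ K − ⌈τK⌉`, `τ = δ^{1/2}`. -/
theorem stmt7 {m n K : ℕ} (Φ : Matrix (Fin m) (Fin n) ℝ) (δ : ℝ)
    (x : Vec n) (v y : Vec m) (T : Finset (Fin n)) (hTne : T.Nonempty)
    (hsupp : suppF x = T) (hcard : T.card = K) (hK1 : 1 ≤ K)
    (hRIP : RIPConst Φ (2 * K) δ) (h0 : 0 < δ) (h1 : δ < 1)
    (hv : v ≠ 0) (hy : y = mulVec' Φ x + v)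
    (hSNR : SNR Φ x v ≥
      (((T ×ˢ T).sup' (hTne.product hTne) fun p => |x p.1| / |x p.2|)) ^ 2
        * δ ^ (-(3 : ℝ) / 2))
    (run : OMPRun Φ y K) :
    ∀ k : ℕ, k ≤ K - ⌈Real.sqrt δ * K⌉₊ →
      (1 - 7 * Real.sqrt δ) *
          (kthLargest x (T \ run.sets k) ⌈Real.sqrt δ * K⌉₊) ^ 2 ≤
        ‖run.res k‖ ^ 2 - ‖run.res (k + 1)‖ ^ 2 := by
  intro k hk
  have hrip := hRIP.1.2
  obtain ⟨τ, hτdef⟩ : ∃ τ, τ = Real.sqrt δ := ⟨_, rfl⟩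
  rw [← hτdef] at hk ⊢
  have hτ : 0 < τ := by rw [hτdef]; exact Real.sqrt_pos.2 h0
  have hδ : τ ^ 2 = δ := by rw [hτdef]; exact Real.sq_sqrt h0.le
  have hτ1 : τ < 1 := by nlinarith
  have hK0 : (0 : ℝ) < K := by exact_mod_cast hK1
  obtain ⟨j, hj⟩ : ∃ j, j = ⌈τ * K⌉₊ := ⟨_, rfl⟩
  rw [← hj] at hk ⊢
  have hj1 : 1 ≤ j := by rw [hj]; exact Nat.ceil_pos.2 (by positivity)
  have hjK : j ≤ K := by rw [hj]; exact Nat.ceil_le.2 (by nlinarith)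
  have hjτ : τ * K ≤ j := by rw [hj]; exact Nat.le_ceil _
  have hkK : k < K := by omega
  obtain ⟨hck, hsk, hrk, -⟩ := run_state run k hkK.le
  have hφ : ‖col Φ (run.idx (k + 1))‖ ^ 2 ≤ 1 + δ := by
    have := (hrip (EuclideanSpace.single (run.idx (k + 1)) 1) (by
      have : suppF (EuclideanSpace.single (run.idx (k + 1)) (1 : ℝ)) ⊆ {run.idx (k + 1)} := by
        rw [supp_sub]; intro i hi; simpa using hi
      have := Finset.card_le_card this
      simp only [Finset.card_singleton] at this
      omega)).2
    rw [mv_single] at this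
    simpa using this
  have hdec := run_decrease run k hkK δ h0 hφ
  have hdδ : 0 < 1 + δ := by linarith
  rcases le_or_gt (1 / 7) τ with h7 | h7
  · have a1 : 0 ≤ ‖run.res k‖ ^ 2 - ‖run.res (k + 1)‖ ^ 2 := by
      have := (sq_nonneg _).trans hdec
      exact nonneg_of_mul_nonneg_left this hdδ
    refine le_trans ?_ a1
    exact mul_nonpos_of_nonpos_of_nonneg (by linarith) (sq_nonneg _)
  -- main case
  obtain ⟨Γ, hΓ⟩ : ∃ Γ, Γ = T \ run.sets k := ⟨_, rfl⟩
  rw [← hΓ]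
  have hΓc : j ≤ Γ.card := by
    have := Finset.le_card_sdiff (run.sets k) T
    rw [← hΓ] at this
    omega
  obtain ⟨⟨i0, hi0, hai0⟩, hjS⟩ := kth_spec x Γ j hj1 hΓc
  obtain ⟨a, haa⟩ : ∃ a, a = kthLargest x Γ j := ⟨_, rfl⟩
  rw [← haa] at hai0 hjS ⊢
  have hxT : ∀ i, i ∈ T ↔ x i ≠ 0 := by
    intro i; rw [← hsupp]; simp [suppF]
  have hΓT : ∀ i ∈ Γ, i ∈ T ∧ i ∉ run.sets k := by
    intro i hi; rwa [hΓ, Finset.mem_sdiff] at hi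
  have hi0T := (hΓT i0 hi0).1
  have ha : 0 < a := by rw [← hai0]; exact abs_pos.2 ((hxT i0).1 hi0T)
  obtain ⟨κ, hκdef⟩ : ∃ κ, κ = (T ×ˢ T).sup' (hTne.product hTne) fun p => |x p.1| / |x p.2| :=
    ⟨_, rfl⟩
  rw [← hκdef] at hSNR
  have hκ : ∀ i ∈ T, |x i| ≤ κ * a := by
    intro i hi
    rw [← div_le_iff₀ ha, hκdef, ← hai0]
    exact Finset.le_sup' (fun p : Fin n × Fin n => |x p.1| / |x p.2|)
      (Finset.mk_mem_product hi hi0T)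
  have hκ0 : 0 < κ := by
    have := hκ i0 hi0T
    rw [hai0] at this
    exact pos_of_mul_pos_left (lt_of_lt_of_le ha this) ha.le
  obtain ⟨S, hS⟩ : ∃ S, S = Γ.filter fun i => a ≤ |x i| := ⟨_, rfl⟩
  rw [← hS] at hjS
  have hsτ : τ * K ≤ (S.card : ℝ) := hjτ.trans (by exact_mod_cast hjS)
  have hS0 : (0 : ℝ) < S.card := lt_of_lt_of_le (by positivity) hsτ
  have hV0 : 0 < ‖v‖ := norm_pos_iff.2 hv
  have hX : ‖mulVec' Φ x‖ ^ 2 ≤ (1 + δ) * (K * (κ * a) ^ 2) := by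
    refine (hrip x (by rw [hsupp, hcard]; omega)).2.trans ?_
    gcongr
    rw [EuclideanSpace.real_norm_sq_eq, ← hcard, ← nsmul_eq_mul]
    rw [← Finset.sum_subset (Finset.subset_univ T) (fun i _ hi => by
      have : x i = 0 := by by_contra h; exact hi ((hxT i).2 h)
      simp [this])]
    refine Finset.sum_le_card_nsmul _ _ _ fun i hi => ?_
    rw [← sq_abs]
    have := hκ i hi
    gcongr
  have hV := noise_bound hτ hδ hV0 hκ0 ha hsτ hS0.le hSNR hX
  -- the error vector
  obtain ⟨u, hu⟩ : ∃ u, u = x - run.est k := ⟨_, rfl⟩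
  have hres : run.res k = mulVec' Φ u + v := by
    rw [hrk, hu, mv_sub]
    have hy2 := sub_eq_iff_eq_add'.2 hy
    rw [← hy2]; abel
  have huΓ : ∀ i ∈ Γ, u i = x i := by
    intro i hi
    rw [supp_sub] at hsk
    simp [hu, hsk i (hΓT i hi).2]
  obtain ⟨B, hB⟩ : ∃ B, B = T ∪ run.sets k := ⟨_, rfl⟩
  have hBc : B.card ≤ 2 * K := by
    rw [hB]; exact (Finset.card_union_le _ _).trans (by omega)
  have hSΓ : S ⊆ Γ := by rw [hS]; exact Finset.filter_subset _ _
  have hSB : S ⊆ B := fun i hi => by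
    rw [hB]; exact Finset.mem_union_left _ (hΓT i (hSΓ hi)).1
  have hskB : run.sets k ⊆ B := by rw [hB]; exact Finset.subset_union_right
  have huB : suppF u ⊆ B := by
    rw [supp_sub] at hsk ⊢
    intro i hi
    rw [hB, Finset.mem_union, not_or] at hi
    have : x i = 0 := by by_contra h; exact hi.1 ((hxT i).2 h)
    simp [hu, this, hsk i hi.2]
  have hgen : ∀ A : Finset (Fin n), A ⊆ B →
      ‖restrict u A‖ ^ 2 - δ * ‖restrict u A‖ * ‖u‖ - (1 + δ) * ‖restrict u A‖ * ‖v‖ ≤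
        inner ℝ (mulVec' Φ (restrict u A)) (run.res k) := by
    intro A hA
    have hs := (supp_restrict u A).trans hA
    have b1 := rip_bilin Φ δ (2 * K) B hBc hrip _ u hs huB
    rw [inner_restrict] at b1
    have b2 := (hrip _ ((Finset.card_le_card hs).trans hBc)).2
    have b3 : ‖mulVec' Φ (restrict u A)‖ ≤ (1 + δ) * ‖restrict u A‖ := by
      apply le_of_sq_le_sq_aux _ (by positivity)
      rw [mul_pow]
      refine b2.trans ?_
      gcongr
      nlinarith
    have b4 : -(‖mulVec' Φ (restrict u A)‖ * ‖v‖) ≤ inner ℝ (mulVec' Φ (restrict u A)) v :=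
      (abs_le.1 (abs_real_inner_le_norm _ _)).1
    have b5 : ‖mulVec' Φ (restrict u A)‖ * ‖v‖ ≤ (1 + δ) * ‖restrict u A‖ * ‖v‖ := by gcongr
    rw [hres, inner_add_right]
    linarith
  obtain ⟨M, hM⟩ : ∃ M, M = |dot (col Φ (run.idx (k + 1))) (run.res k)| := ⟨_, rfl⟩
  rw [← sq_abs, ← hM] at hdec
  have hM0 : 0 ≤ M := by rw [hM]; positivity
  have hQ : 0 < Real.sqrt S.card := Real.sqrt_pos.2 hS0
  have hQ2 : Real.sqrt S.card ^ 2 = S.card := Real.sq_sqrt hS0.le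
  have e5 : Real.sqrt S.card * a ≤ ‖restrict u S‖ := by
    apply le_of_sq_le_sq_aux _ (norm_nonneg _)
    rw [mul_pow, hQ2, norm_restrict, ← nsmul_eq_mul]
    refine Finset.card_nsmul_le_sum _ _ _ fun i hi => ?_
    rw [huΓ i (hSΓ hi), ← sq_abs (x i)]
    rw [hS, Finset.mem_filter] at hi
    have := hi.2
    gcongr
  have hN : 0 < ‖restrict u S‖ := lt_of_lt_of_le (by positivity) e5
  have e1 : ‖restrict u S‖ - δ * ‖u‖ - (1 + δ) * ‖v‖ ≤ M * Real.sqrt S.card := by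
    have c1 := hgen S hSB
    have c2 : inner ℝ (mulVec' Φ (restrict u S)) (run.res k) ≤ M * ∑ i ∈ S, |u i| := by
      rw [inner_mv, Finset.mul_sum]
      have : ∑ i, (restrict u S) i * dot (col Φ i) (run.res k)
          = ∑ i ∈ S, u i * dot (col Φ i) (run.res k) := by
        simp [_root_.restrict]
      rw [this]
      refine Finset.sum_le_sum fun i hi => ?_
      refine (le_abs_self _).trans ?_
      rw [abs_mul, mul_comm]
      have := run.idx_max k hkK i (hΓT i (hSΓ hi)).2
      rw [← hM] at this
      gcongr
    have c3 : ∑ i ∈ S, |u i| ≤ Real.sqrt S.card * ‖restrict u S‖ := by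
      apply le_of_sq_le_sq_aux _ (by positivity)
      rw [mul_pow, hQ2, norm_restrict]
      have := sq_sum_le_card_mul_sum_sq (s := S) (f := fun i => |u i|)
      simpa using this
    have c4 : M * ∑ i ∈ S, |u i| ≤ M * (Real.sqrt S.card * ‖restrict u S‖) := by gcongr
    refine le_of_mul_le_mul_right ?_ hN
    linarith
  have e2 : ‖restrict u (run.sets k)‖ ≤ δ * ‖u‖ + (1 + δ) * ‖v‖ := by
    have c1 := hgen _ hskB
    rw [run_orth run k hkK.le _ (supp_restrict u _)] at c1
    rcases (norm_nonneg (restrict u (run.sets k))).eq_or_lt with h | h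
    · rw [← h]; positivity
    · refine le_of_mul_le_mul_right ?_ h
      linarith
  have e3 : ‖u‖ ≤ ‖restrict u (run.sets k)‖ + ‖restrict u S‖ + ‖restrict u (Γ \ S)‖ := by
    have : u = restrict u (run.sets k) + restrict u S + restrict u (Γ \ S) := by
      ext i
      rw [supp_sub] at huB
      simp only [_root_.restrict, PiLp.add_apply]
      by_cases p1 : i ∈ run.sets k
      · have p2 : i ∉ Γ := fun h => (hΓT i h).2 p1
        have p3 : i ∉ S := fun h => p2 (hSΓ h)
        simp [p1, p2, p3]
      · by_cases p2 : i ∈ Γ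
        · by_cases p3 : i ∈ S <;> simp [p1, p2, p3]
        · have p3 : i ∉ S := fun h => p2 (hSΓ h)
          have : u i = 0 := by
            apply huB
            rw [hB, Finset.mem_union]
            rintro (h | h)
            · exact p2 (by rw [hΓ, Finset.mem_sdiff]; exact ⟨h, p1⟩)
            · exact p1 h
          simp [p1, p2, p3, this]
    calc ‖u‖ = ‖restrict u (run.sets k) + restrict u S + restrict u (Γ \ S)‖ := by rw [← this]
      _ ≤ _ := norm_add₃_le
  have e4 : τ * ‖restrict u (Γ \ S)‖ ≤ Real.sqrt S.card * a := by
    have c1 : ‖restrict u (Γ \ S)‖ ^ 2 ≤ K * a ^ 2 := by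
      rw [norm_restrict]
      have d1 : ∑ i ∈ Γ \ S, u i ^ 2 ≤ (Γ \ S).card • a ^ 2 := by
        refine Finset.sum_le_card_nsmul _ _ _ fun i hi => ?_
        rw [Finset.mem_sdiff] at hi
        rw [huΓ i hi.1, ← sq_abs]
        have : |x i| ≤ a := by
          by_contra h
          apply hi.2
          rw [hS, Finset.mem_filter]
          exact ⟨hi.1, (not_le.1 h).le⟩
        gcongr
      rw [nsmul_eq_mul] at d1
      refine d1.trans ?_
      have : (Γ \ S).card ≤ K := by
        rw [← hcard]
        exact Finset.card_le_card fun i hi => (hΓT i (Finset.mem_sdiff.1 hi).1).1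
      gcongr
    apply le_of_sq_le_sq_aux _ (by positivity)
    rw [mul_pow, mul_pow, hQ2]
    calc τ ^ 2 * ‖restrict u (Γ \ S)‖ ^ 2 ≤ τ ^ 2 * (K * a ^ 2) := by gcongr
      _ = τ * (τ * K) * a ^ 2 := by ring
      _ ≤ 1 * (S.card : ℝ) * a ^ 2 := by gcongr
      _ = _ := by ring
  have hfin := scalar_core τ δ M (Real.sqrt S.card) a ‖restrict u S‖ ‖u‖ ‖v‖
    ‖restrict u (run.sets k)‖ ‖restrict u (Γ \ S)‖ hτ h7 hδ hQ ha hV e1 e2 e3 e4 e5 hM0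
  exact le_of_mul_le_mul_right (hfin.trans hdec) hdδ

end
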